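/- arXiv:1103.3401 — 2 statements merged into one kernel-verified Lean document; each statement's English description precedes it below -/
import Mathlib

section
/- Let (X,d) be a proper complete separable metric space with base point x0, 1 <= p < infinity, and f: X -> X a continuous map whose pushforward f_* is a w_p-continuous self-map of P_p(X). Let q: X -> (P_p(X), w_p) be a continuous Markov kernel with M := sup over x in X of w_p(q(x), delta_{f(x)}) < infinity. Then the map P defined by P(mu)(B) = integral over X of q(x)(B) dmu(x) maps P_p(X) into itself, is w_p-continuous, is convex linear, and satisfies w_p(P(mu), f_*(mu)) <= M for every mu in P_p(X); i.e. P is an MW-map of order p relative to f with noise level M. -/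
open MeasureTheory Topology Filter Metric Set
open scoped ENNReal NNReal

noncomputable section

variable {X : Type*}

/-- `π` is a coupling of `μ` and `ν`, i.e. a measure on `X × X` with marginals `μ` and `ν`. -/
def IsCoupling [MeasurableSpace X] (π : Measure (X × X)) (μ ν : Measure X) : Prop :=
  π.map Prod.fst = μ ∧ π.map Prod.snd = ν

/-- The `p`-th power optimal transport cost between `μ` and `ν`. -/
def wCost [MetricSpace X] [MeasurableSpace X] (p : ℝ) (μ ν : Measure X) : ℝ≥0∞ :=
  ⨅ π ∈ {π : Measure (X × X) | IsProbabilityMeasure π ∧ IsCoupling π μ ν},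
    ∫⁻ q, ENNReal.ofReal (dist q.1 q.2 ^ p) ∂π

/-- The Wasserstein distance of order `p` (the `p`-th root of the optimal cost), as a real
number. -/
def Wp [MetricSpace X] [MeasurableSpace X] (p : ℝ) (μ ν : Measure X) : ℝ :=
  ((wCost p μ ν) ^ (1 / p)).toReal

/-- `μ` has finite `p`-th moment about the base point `x₀`. -/
def FiniteMoment [MetricSpace X] [MeasurableSpace X] (p : ℝ) (x₀ : X) (μ : Measure X) : Prop :=
  ∫⁻ x, ENNReal.ofReal (dist x₀ x ^ p) ∂μ < ⊤

/-- The Wasserstein space `P_p(X)`: Borel probability measures with finite `p`-th moment. -/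
def Pp [MetricSpace X] [MeasurableSpace X] (p : ℝ) (x₀ : X) : Set (Measure X) :=
  {μ | IsProbabilityMeasure μ ∧ FiniteMoment p x₀ μ}

/-- The convex combination `t • μ + (1 - t) • ν` of two measures. -/
def mix [MeasurableSpace X] (t : ℝ) (μ ν : Measure X) : Measure X :=
  ENNReal.ofReal t • μ + ENNReal.ofReal (1 - t) • ν

/-- `μₙ → μ` in the weak topology: integrals of bounded continuous functions converge. -/
def WeakConv [MeasurableSpace X] [TopologicalSpace X] (μs : ℕ → Measure X) (μ : Measure X) :
    Prop :=
  ∀ g : BoundedContinuousFunction X ℝ,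
    Tendsto (fun n => ∫ x, g x ∂(μs n)) atTop (𝓝 (∫ x, g x ∂μ))

/-- `μₙ → μ` with respect to the Wasserstein distance of order `p`. -/
def WpTendsto [MetricSpace X] [MeasurableSpace X] (p : ℝ) (μs : ℕ → Measure X)
    (μ : Measure X) : Prop :=
  Tendsto (fun n => Wp p (μs n) μ) atTop (𝓝 0)

/-- A set of measures is sequentially compact for the Wasserstein distance of order `p`. -/
def WpSeqCompact [MetricSpace X] [MeasurableSpace X] (p : ℝ) (S : Set (Measure X)) : Prop :=
  ∀ μs : ℕ → Measure X, (∀ n, μs n ∈ S) →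
    ∃ μ ∈ S, ∃ φ : ℕ → ℕ, StrictMono φ ∧ WpTendsto p (fun n => μs (φ n)) μ

/-- A set of measures is sequentially compact for the weak topology. -/
def WeakSeqCompact [MeasurableSpace X] [TopologicalSpace X] (S : Set (Measure X)) : Prop :=
  ∀ μs : ℕ → Measure X, (∀ n, μs n ∈ S) →
    ∃ μ ∈ S, ∃ φ : ℕ → ℕ, StrictMono φ ∧ WeakConv (fun n => μs (φ n)) μ

/-!
On probability measures with finite `p`-th moment, `w_p`-convergence is weak convergence together
with convergence of the `p`-th moments about `x₀`. For the direction that builds couplings, cover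
almost all of `X` by disjoint open cells of small diameter with `μ`-null complement, transport
inside the cells, and move the small remaining mass through `x₀`.

Weak convergence is preserved by `μ ↦ ∫ q(x) dμ(x)` because `x ↦ ∫ g dq(x)` is bounded and
continuous for every bounded continuous `g`. The bound `w_p(q(x), δ_{f(x)}) ≤ M` puts the `p`-th
moment of `q(x)` below `H(x) = 2 ^ (p - 1) * (d(x₀, f x) ^ p + M ^ p)`, whose integrals converge
because `f_*` is `w_p`-continuous; a generalized dominated convergence theorem along weakly
convergent measures then gives convergence of the moments of `∫ q(x) dμ(x)`. The noise bound is
read off the coupling that draws `x` from `μ`, then `y` from `q(x)`, and returns `(y, f x)`.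
-/

section ENNReal

variable {ι : Type*} {l : Filter ι} {a b : ι → ℝ≥0∞} {A B : ℝ≥0∞}

theorem eventually_le_add_of_le_liminf (h : A ≤ liminf a l) (hA : A ≠ ⊤) {ε : ℝ≥0∞}
    (hε : 0 < ε) : ∀ᶠ n in l, A ≤ a n + ε := by
  rcases eq_or_ne A 0 with rfl | hA₀
  · exact Eventually.of_forall fun _ => zero_le
  · have hlt : A - ε < liminf a l := (ENNReal.sub_lt_self hA hA₀ hε.ne').trans_le h
    filter_upwards [eventually_lt_of_lt_liminf hlt] with n hn
    exact tsub_le_iff_right.1 hn.le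

theorem tendsto_of_tendsto_add_of_le_liminf (hAB : A + B ≠ ⊤)
    (h : Tendsto (fun n => a n + b n) l (𝓝 (A + B))) (hA : A ≤ liminf a l)
    (hB : B ≤ liminf b l) : Tendsto b l (𝓝 B) := by
  obtain ⟨hA_top, hB_top⟩ := ENNReal.add_ne_top.1 hAB
  refine (ENNReal.tendsto_nhds hB_top).2 fun ε hε => ?_
  have hε₂ : 0 < ε / 2 := ENNReal.half_pos hε.ne'
  filter_upwards [(ENNReal.tendsto_nhds hAB).1 h _ hε₂,
    eventually_le_add_of_le_liminf hA hA_top hε₂,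
    eventually_le_add_of_le_liminf hB hB_top hε] with n hsum ha hb
  refine ⟨tsub_le_iff_right.2 hb, (ENNReal.add_le_add_iff_left hA_top).1 ?_⟩
  calc A + b n ≤ a n + ε / 2 + b n := by gcongr
    _ = a n + b n + ε / 2 := by ring
    _ ≤ A + B + ε / 2 + ε / 2 := add_le_add_left hsum.2 _
    _ = A + (B + ε) := by rw [add_assoc, ENNReal.add_halves, add_assoc]

theorem tendsto_zero_of_eventually_le_add {κ : Type*} {m : Filter κ} [NeBot m] {c : κ → ℝ≥0∞}
    (hc : Tendsto c m (𝓝 0))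
    (h : ∀ᶠ k in m, ∃ b : ι → ℝ≥0∞, Tendsto b l (𝓝 0) ∧ ∀ n, a n ≤ c k + b n) :
    Tendsto a l (𝓝 0) := by
  refine ENNReal.tendsto_nhds_zero.2 fun ε hε => ?_
  have hε₂ : 0 < ε / 2 := ENNReal.half_pos hε.ne'
  obtain ⟨k, hck, b, hb, hle⟩ := ((ENNReal.tendsto_nhds_zero.1 hc _ hε₂).and h).exists
  filter_upwards [ENNReal.tendsto_nhds_zero.1 hb _ hε₂] with n hn
  exact (hle n).trans ((add_le_add hck hn).trans_eq (ENNReal.add_halves ε))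

end ENNReal

section WeakConvergence

variable [TopologicalSpace X] [MeasurableSpace X] [OpensMeasurableSpace X]
  {μs ρs : ℕ → Measure X} {μ : Measure X} {G H : X → ℝ≥0∞}

theorem lintegral_le_liminf_of_measure_isOpen_le_liminf
    (h : ∀ U, IsOpen U → μ U ≤ liminf (fun n => μs n U) atTop) (hH : Continuous H)
    (hH_top : ∀ x, H x ≠ ⊤) :
    ∫⁻ x, H x ∂μ ≤ liminf (fun n => ∫⁻ x, H x ∂(μs n)) atTop := by
  have hcont : Continuous fun x => (H x).toReal :=
    ENNReal.continuousOn_toReal.comp_continuous hH hH_top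
  simpa only [ENNReal.ofReal_toReal (hH_top _)] using
    lintegral_le_liminf_lintegral_of_forall_isOpen_measure_le_liminf_measure hcont
      (fun _ => ENNReal.toReal_nonneg) h

theorem weakConv_coe_iff_tendsto {μs : ℕ → ProbabilityMeasure X} {μ : ProbabilityMeasure X} :
    WeakConv (fun n => (μs n : Measure X)) μ ↔ Tendsto μs atTop (𝓝 μ) :=
  ProbabilityMeasure.tendsto_iff_forall_integral_tendsto.symm

variable [HasOuterApproxClosed X] [∀ n, IsProbabilityMeasure (μs n)] [IsProbabilityMeasure μ]

theorem WeakConv.measure_isOpen_le_liminf (h : WeakConv μs μ) {U : Set X} (hU : IsOpen U) :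
    μ U ≤ liminf (fun n => μs n U) atTop :=
  ProbabilityMeasure.le_liminf_measure_open_of_tendsto
    ((weakConv_coe_iff_tendsto (μs := fun n => ⟨μs n, inferInstance⟩)
      (μ := ⟨μ, inferInstance⟩)).1 h) hU

theorem WeakConv.lintegral_le_liminf (h : WeakConv μs μ) (hH : Continuous H)
    (hH_top : ∀ x, H x ≠ ⊤) : ∫⁻ x, H x ∂μ ≤ liminf (fun n => ∫⁻ x, H x ∂(μs n)) atTop :=
  lintegral_le_liminf_of_measure_isOpen_le_liminf (fun _ => h.measure_isOpen_le_liminf) hH hH_top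

theorem WeakConv.tendsto_lintegral_of_dominated (h : WeakConv μs μ) (hG : Continuous G)
    (hH : Continuous H) (hGH : ∀ x, G x ≤ H x) (hH_top : ∀ x, H x ≠ ⊤)
    (hHμ : ∫⁻ x, H x ∂μ ≠ ⊤)
    (hlim : Tendsto (fun n => ∫⁻ x, H x ∂(μs n)) atTop (𝓝 (∫⁻ x, H x ∂μ))) :
    Tendsto (fun n => ∫⁻ x, G x ∂(μs n)) atTop (𝓝 (∫⁻ x, G x ∂μ)) := by
  have hG_top : ∀ x, G x ≠ ⊤ := fun x => ne_top_of_le_ne_top (hH_top x) (hGH x)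
  have hHG : Continuous fun x => H x - G x :=
    continuous_iff_continuousAt.2 fun x =>
      ENNReal.Tendsto.sub hH.continuousAt hG.continuousAt (Or.inl (hH_top x))
  have hsplit (ν : Measure X) : ∫⁻ x, H x ∂ν = ∫⁻ x, H x - G x ∂ν + ∫⁻ x, G x ∂ν := by
    rw [← lintegral_add_right _ hG.measurable]
    exact lintegral_congr fun x => (tsub_add_cancel_of_le (hGH x)).symm
  -- Fatou bounds the integrals of both `G` and `H - G` from below in the limit, and their sum
  -- converges, so both converge.
  simp only [hsplit] at hlim hHμ
  exact tendsto_of_tendsto_add_of_le_liminf hHμ hlim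
    (h.lintegral_le_liminf hHG fun x => ENNReal.sub_ne_top (hH_top x))
    (h.lintegral_le_liminf hG hG_top)

theorem WeakConv.tendsto_lintegral_zero_of_le (h : WeakConv μs μ) (hρ : ∀ n, ρs n ≤ μs n)
    (hρ₀ : Tendsto (fun n => ρs n univ) atTop (𝓝 0)) (hH : Continuous H)
    (hH_top : ∀ x, H x ≠ ⊤) (hHμ : ∫⁻ x, H x ∂μ ≠ ⊤)
    (hlim : Tendsto (fun n => ∫⁻ x, H x ∂(μs n)) atTop (𝓝 (∫⁻ x, H x ∂μ))) :
    Tendsto (fun n => ∫⁻ x, H x ∂(ρs n)) atTop (𝓝 0) := by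
  have hfin (n : ℕ) : IsFiniteMeasure (ρs n) := isFiniteMeasure_of_le _ (hρ n)
  have hsplit (n : ℕ) : μs n - ρs n + ρs n = μs n := Measure.sub_add_cancel_of_le (hρ n)
  -- The measures `μs n - ρs n` still converge weakly to `μ`, so by Fatou they keep at least the
  -- whole limit of `∫⁻ H ∂(μs n)` and leave nothing for `ρs n`.
  have hopen (U : Set X) (hU : IsOpen U) :
      μ U ≤ liminf (fun n => (μs n - ρs n) U) atTop := by
    have hρU : Tendsto (fun n => ρs n U) atTop (𝓝 0) :=
      tendsto_of_tendsto_of_tendsto_of_le_of_le tendsto_const_nhds hρ₀ (fun _ => zero_le)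
        fun n => measure_mono (subset_univ U)
    calc μ U ≤ liminf (fun n => μs n U) atTop := h.measure_isOpen_le_liminf hU
      _ = liminf (fun n => (μs n - ρs n) U + ρs n U) atTop := by
        simp only [← Measure.add_apply, hsplit]
      _ = liminf (fun n => (μs n - ρs n) U) atTop :=
        ENNReal.liminf_add_of_right_tendsto_zero hρU _
  refine tendsto_of_tendsto_add_of_le_liminf (a := fun n => ∫⁻ x, H x ∂(μs n - ρs n))
    (by rwa [add_zero]) ?_ (lintegral_le_liminf_of_measure_isOpen_le_liminf hopen hH hH_top)
    zero_le
  simpa only [← lintegral_add_measure, hsplit, add_zero] using hlim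

end WeakConvergence

section Cells

open scoped Function

variable [PseudoMetricSpace X] [MeasurableSpace X] [OpensMeasurableSpace X]

theorem exists_mem_Ioo_measure_sphere_eq_zero (μ : Measure X) [SFinite μ] {ι : Type*}
    [Countable ι] (x : ι → X) {a b : ℝ} (hab : a < b) :
    ∃ r ∈ Ioo a b, ∀ i, μ (sphere (x i) r) = 0 := by
  have hcountable : (⋃ i, {r | 0 < μ {y | dist y (x i) = r}}).Countable :=
    countable_iUnion fun i => Measure.countable_meas_level_set_pos (by fun_prop)
  obtain ⟨r, hr, hab⟩ := (hcountable.dense_compl ℝ).exists_between hab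
  exact ⟨r, hab, fun i => by_contra fun hi => hr (mem_iUnion.2 ⟨i, pos_iff_ne_zero.2 hi⟩)⟩

theorem exists_isOpen_pairwise_disjoint_dist_le [TopologicalSpace.SeparableSpace X] [Nonempty X]
    (μ : Measure X) [SFinite μ] {ε : ℝ} (hε : 0 < ε) :
    ∃ G : ℕ → Set X, (∀ i, IsOpen (G i)) ∧ Pairwise (Disjoint on G) ∧
      (∀ i, ∀ x ∈ G i, ∀ y ∈ G i, dist x y ≤ ε) ∧ μ (⋃ i, G i)ᶜ = 0 := by
  let x := TopologicalSpace.denseSeq X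
  obtain ⟨r, ⟨hr₀, hrε⟩, hsphere⟩ := exists_mem_Ioo_measure_sphere_eq_zero μ x (half_pos hε)
  refine ⟨fun i => ball (x i) r \ ⋃ j ∈ Finset.range i, closedBall (x j) r, fun i => ?_, ?_, ?_, ?_⟩
  · exact isOpen_ball.sdiff (isClosed_biUnion_finset fun _ _ => isClosed_closedBall)
  · refine (pairwise_disjoint_on _).2 fun i j hij => disjoint_left.2 fun y hyi hyj => hyj.2 ?_
    exact mem_biUnion (Finset.mem_range.2 hij) (ball_subset_closedBall hyi.1)
  · intro i y hy z hz
    have := dist_triangle_right y z (x i)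
    linarith [mem_ball.1 hy.1, mem_ball.1 hz.1]
  · refine measure_mono_null (fun y hy => ?_) (measure_iUnion_null hsphere)
    have hex : ∃ i, dist y (x i) ≤ r :=
      ((TopologicalSpace.denseRange_denseSeq X).exists_dist_lt y hr₀).imp fun _ => le_of_lt
    refine mem_iUnion.2 ⟨Nat.find hex, (Nat.find_spec hex).antisymm (not_lt.1 fun hlt => hy ?_)⟩
    refine mem_iUnion.2 ⟨Nat.find hex, hlt, fun hmem => ?_⟩
    obtain ⟨j, hj, hyj⟩ := mem_iUnion₂.1 hmem
    exact Nat.find_min hex (Finset.mem_range.1 hj) hyj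

theorem WeakConv.tendsto_tsum_min_measure {μs : ℕ → Measure X} {μ : Measure X}
    [∀ n, IsProbabilityMeasure (μs n)] [IsProbabilityMeasure μ] (h : WeakConv μs μ)
    {G : ℕ → Set X} (hG : ∀ i, IsOpen (G i)) (hdisj : Pairwise (Disjoint on G))
    (hμG : μ (⋃ i, G i)ᶜ = 0) :
    Tendsto (fun n => ∑' i, min (μs n (G i)) (μ (G i))) atTop (𝓝 1) := by
  have hle_one (n : ℕ) : ∑' i, min (μs n (G i)) (μ (G i)) ≤ 1 :=
    calc ∑' i, min (μs n (G i)) (μ (G i)) ≤ ∑' i, μ (G i) :=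
          ENNReal.tsum_le_tsum fun i => min_le_right _ _
      _ = μ (⋃ i, G i) := (measure_iUnion hdisj fun i => (hG i).measurableSet).symm
      _ ≤ 1 := prob_le_one
  refine tendsto_of_le_liminf_of_limsup_le ?_
    (limsup_le_of_le (h := Eventually.of_forall hle_one))
  calc (1 : ℝ≥0∞) = ∑' i, μ (G i) := by
        rw [← measure_iUnion hdisj fun i => (hG i).measurableSet]
        exact ((prob_compl_eq_zero_iff (.iUnion fun i => (hG i).measurableSet)).1 hμG).symm
    _ ≤ ∑' i, liminf (fun n => min (μs n (G i)) (μ (G i))) atTop := by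
        refine ENNReal.tsum_le_tsum fun i => ?_
        rw [liminf_min, liminf_const]
        exact le_min (h.measure_isOpen_le_liminf (hG i)) le_rfl
    _ ≤ liminf (fun n => ∑' i, min (μs n (G i)) (μ (G i))) atTop := by
        simpa only [lintegral_count] using
          lintegral_liminf_le (μ := Measure.count) fun n =>
            (measurable_of_countable fun i => min (μs n (G i)) (μ (G i)))

end Cells

theorem edist_rpow_le_two_rpow_mul [PseudoEMetricSpace X] {p : ℝ} (hp : 1 ≤ p) (x y z : X) :
    edist x y ^ p ≤ 2 ^ (p - 1) * (edist z x ^ p + edist z y ^ p) :=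
  calc edist x y ^ p ≤ (edist z x + edist z y) ^ p :=
        ENNReal.rpow_le_rpow (edist_triangle_left x y z) (zero_le_one.trans hp)
    _ ≤ 2 ^ (p - 1) * (edist z x ^ p + edist z y ^ p) :=
        ENNReal.rpow_add_le_mul_rpow_add_rpow _ _ hp

theorem continuous_edist_rpow [PseudoEMetricSpace X] (x₀ : X) (p : ℝ) :
    Continuous fun x => edist x₀ x ^ p :=
  ENNReal.continuous_rpow_const.comp (continuous_const.edist continuous_id)

theorem edist_rpow_ne_top [PseudoMetricSpace X] {p : ℝ} (hp : 0 ≤ p) (x y : X) :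
    edist x y ^ p ≠ ⊤ :=
  ENNReal.rpow_ne_top_of_nonneg hp (edist_ne_top x y)

theorem two_rpow_ne_top (s : ℝ) : (2 : ℝ≥0∞) ^ s ≠ ⊤ := by
  simp only [ne_eq, ENNReal.rpow_eq_top_iff, OfNat.ofNat_ne_zero, ENNReal.ofNat_ne_top, false_and,
    or_self, not_false_eq_true]

section Coupling

variable [MeasurableSpace X] {π π₁ π₂ : Measure (X × X)} {α α₁ α₂ β β₁ β₂ : Measure X}

theorem IsCoupling.add (h₁ : IsCoupling π₁ α₁ β₁) (h₂ : IsCoupling π₂ α₂ β₂) :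
    IsCoupling (π₁ + π₂) (α₁ + α₂) (β₁ + β₂) :=
  ⟨by rw [Measure.map_add _ _ measurable_fst, h₁.1, h₂.1],
    by rw [Measure.map_add _ _ measurable_snd, h₁.2, h₂.2]⟩

theorem IsCoupling.sum {ι : Type*} {π : ι → Measure (X × X)} {α β : ι → Measure X}
    (h : ∀ i, IsCoupling (π i) (α i) (β i)) :
    IsCoupling (Measure.sum π) (Measure.sum α) (Measure.sum β) :=
  ⟨by simp only [Measure.map_sum measurable_fst.aemeasurable, (h _).1],
    by simp only [Measure.map_sum measurable_snd.aemeasurable, (h _).2]⟩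

theorem exists_isCoupling [IsFiniteMeasure α] [SFinite β] (h : α univ = β univ) :
    ∃ π, IsCoupling π α β := by
  rcases eq_or_ne (α univ) 0 with h₀ | h₀
  · rw [Measure.measure_univ_eq_zero.1 h₀, Measure.measure_univ_eq_zero.1 (h.symm.trans h₀)]
    exact ⟨0, Measure.map_zero _, Measure.map_zero _⟩
  · refine ⟨(α univ)⁻¹ • α.prod β, ?_, ?_⟩ <;>
    simp only [Measure.map_smul, Measure.map_fst_prod, Measure.map_snd_prod, ← h, smul_smul,
      ENNReal.inv_mul_cancel h₀ (measure_ne_top α univ), one_smul]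

theorem IsCoupling.lintegral_fst (h : IsCoupling π α β) {g : X → ℝ≥0∞} (hg : Measurable g) :
    ∫⁻ z, g z.1 ∂π = ∫⁻ x, g x ∂α := by
  rw [← h.1, lintegral_map hg measurable_fst]

theorem IsCoupling.lintegral_snd (h : IsCoupling π α β) {g : X → ℝ≥0∞} (hg : Measurable g) :
    ∫⁻ z, g z.2 ∂π = ∫⁻ x, g x ∂β := by
  rw [← h.2, lintegral_map hg measurable_snd]

theorem IsCoupling.measure_univ_left (h : IsCoupling π α β) : π univ = α univ := by
  rw [← h.1, Measure.map_apply measurable_fst .univ, preimage_univ]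

theorem IsCoupling.measure_univ_right (h : IsCoupling π α β) : π univ = β univ := by
  rw [← h.2, Measure.map_apply measurable_snd .univ, preimage_univ]

theorem IsCoupling.isProbabilityMeasure [IsProbabilityMeasure α] (h : IsCoupling π α β) :
    IsProbabilityMeasure π :=
  ⟨h.measure_univ_left.trans measure_univ⟩

theorem IsCoupling.lintegral_edist_rpow_le_of_ae_mem [PseudoEMetricSpace X] {p : ℝ} (hp : 0 ≤ p)
    (h : IsCoupling π α β) {s : Set X} (hα : ∀ᵐ x ∂α, x ∈ s) (hβ : ∀ᵐ x ∂β, x ∈ s) {ε : ℝ≥0∞}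
    (hs : ∀ x ∈ s, ∀ y ∈ s, edist x y ≤ ε) :
    ∫⁻ z, edist z.1 z.2 ^ p ∂π ≤ ε ^ p * α univ := by
  have hfst : ∀ᵐ z ∂π, z.1 ∈ s := ae_of_ae_map measurable_fst.aemeasurable (by rwa [h.1])
  have hsnd : ∀ᵐ z ∂π, z.2 ∈ s := ae_of_ae_map measurable_snd.aemeasurable (by rwa [h.2])
  calc ∫⁻ z, edist z.1 z.2 ^ p ∂π ≤ ∫⁻ _, ε ^ p ∂π := by
        refine lintegral_mono_ae ?_
        filter_upwards [hfst, hsnd] with z hz₁ hz₂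
        exact ENNReal.rpow_le_rpow (hs _ hz₁ _ hz₂) hp
    _ = ε ^ p * α univ := by rw [lintegral_const, h.measure_univ_left]

theorem IsCoupling.lintegral_edist_rpow_le [PseudoEMetricSpace X] [OpensMeasurableSpace X]
    {p : ℝ} (hp : 1 ≤ p) (h : IsCoupling π α β) (x₀ : X) :
    ∫⁻ z, edist z.1 z.2 ^ p ∂π ≤
      2 ^ (p - 1) * (∫⁻ x, edist x₀ x ^ p ∂α + ∫⁻ x, edist x₀ x ^ p ∂β) :=
  have hm : Measurable fun x => edist x₀ x ^ p := by fun_prop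
  calc ∫⁻ z, edist z.1 z.2 ^ p ∂π
      ≤ ∫⁻ z, 2 ^ (p - 1) * (edist x₀ z.1 ^ p + edist x₀ z.2 ^ p) ∂π :=
        lintegral_mono fun z => edist_rpow_le_two_rpow_mul hp z.1 z.2 x₀
    _ = 2 ^ (p - 1) * (∫⁻ x, edist x₀ x ^ p ∂α + ∫⁻ x, edist x₀ x ^ p ∂β) := by
        rw [lintegral_const_mul _ (by fun_prop), lintegral_add_left (by fun_prop),
          h.lintegral_fst hm, h.lintegral_snd hm]

end Coupling

section Cost

theorem exists_le_restrict_measure_univ_eq [MeasurableSpace X] (α : Measure X) [IsFiniteMeasure α]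
    {s : Set X} {c : ℝ≥0∞} (hc : c ≤ α s) : ∃ α' ≤ α.restrict s, α' univ = c := by
  refine ⟨(c / α s) • α.restrict s, ?_, ?_⟩
  · refine Measure.le_iff'.2 fun t => mul_le_of_le_one_left' ?_
    exact ENNReal.div_le_of_le_mul (hc.trans_eq (one_mul _).symm)
  · rw [Measure.smul_apply, Measure.restrict_apply_univ, smul_eq_mul,
      ENNReal.div_mul_cancel' (fun h => le_zero_iff.1 (hc.trans_eq h))
        fun h => absurd h (measure_ne_top α s)]

theorem sum_le_of_le_restrict [MeasurableSpace X] {ι : Type*} [Countable ι] {α : Measure X}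
    {αs : ι → Measure X} {G : ι → Set X} (hG : ∀ i, MeasurableSet (G i))
    (hdisj : Pairwise (Function.onFun Disjoint G)) (h : ∀ i, αs i ≤ α.restrict (G i)) :
    Measure.sum αs ≤ α :=
  calc Measure.sum αs ≤ Measure.sum fun i => α.restrict (G i) :=
        Measure.le_iff.2 fun s hs => by
          simpa only [Measure.sum_apply _ hs] using ENNReal.tsum_le_tsum fun i => h i s
    _ = α.restrict (⋃ i, G i) := (Measure.restrict_iUnion hdisj hG).symm
    _ ≤ α := Measure.restrict_le_self

theorem exists_isCoupling_of_pairwise_disjoint [PseudoEMetricSpace X] [MeasurableSpace X]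
    {p : ℝ} (hp : 0 ≤ p) (α β : Measure X) [IsFiniteMeasure α] [IsFiniteMeasure β]
    {ι : Type*} [Countable ι] {G : ι → Set X}
    (hG : ∀ i, MeasurableSet (G i)) (hdisj : Pairwise (Function.onFun Disjoint G)) {ε : ℝ≥0∞}
    (hε : ∀ i, ∀ x ∈ G i, ∀ y ∈ G i, edist x y ≤ ε) :
    ∃ α' ≤ α, ∃ β' ≤ β, ∃ π, IsCoupling π α' β' ∧ π univ = ∑' i, min (α (G i)) (β (G i)) ∧
      ∫⁻ z, edist z.1 z.2 ^ p ∂π ≤ ε ^ p * π univ := by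
  choose αs hαs hαs_univ using fun i =>
    exists_le_restrict_measure_univ_eq α (min_le_left (α (G i)) (β (G i)))
  choose βs hβs hβs_univ using fun i =>
    exists_le_restrict_measure_univ_eq β (min_le_right (α (G i)) (β (G i)))
  have hfinα (i : ι) : IsFiniteMeasure (αs i) := isFiniteMeasure_of_le _ (hαs i)
  have hfinβ (i : ι) : IsFiniteMeasure (βs i) := isFiniteMeasure_of_le _ (hβs i)
  choose π hπ using fun i => exists_isCoupling ((hαs_univ i).trans (hβs_univ i).symm)
  refine ⟨_, sum_le_of_le_restrict hG hdisj hαs, _, sum_le_of_le_restrict hG hdisj hβs,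
    Measure.sum π, IsCoupling.sum hπ, ?_, ?_⟩
  · simp only [Measure.sum_apply _ MeasurableSet.univ, (hπ _).measure_univ_left, hαs_univ]
  · rw [lintegral_sum_measure, Measure.sum_apply _ MeasurableSet.univ, ← ENNReal.tsum_mul_left]
    refine ENNReal.tsum_le_tsum fun i => ?_
    rw [(hπ i).measure_univ_left]
    exact (hπ i).lintegral_edist_rpow_le_of_ae_mem hp
      (ae_mono (hαs i) (ae_restrict_mem (hG i))) (ae_mono (hβs i) (ae_restrict_mem (hG i))) (hε i)

theorem ofReal_dist_rpow [PseudoMetricSpace X] {p : ℝ} (hp : 0 ≤ p) (x y : X) :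
    ENNReal.ofReal (dist x y ^ p) = edist x y ^ p := by
  rw [edist_dist, ENNReal.ofReal_rpow_of_nonneg dist_nonneg hp]

variable [MetricSpace X] [MeasurableSpace X] {p : ℝ} {μ ν : Measure X} {π : Measure (X × X)}

theorem mem_Pp_iff (hp : 0 ≤ p) {x₀ : X} :
    μ ∈ Pp p x₀ ↔ IsProbabilityMeasure μ ∧ ∫⁻ x, edist x₀ x ^ p ∂μ < ⊤ := by
  simp only [Pp, FiniteMoment, ofReal_dist_rpow hp, mem_ofPred_eq]

theorem wCost_eq_iInf_edist (hp : 0 ≤ p) [IsProbabilityMeasure μ] :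
    wCost p μ ν = ⨅ (π) (_ : IsCoupling π μ ν), ∫⁻ z, edist z.1 z.2 ^ p ∂π := by
  simp only [wCost, ofReal_dist_rpow hp]
  refine iInf_congr fun π => iInf_congr_Prop ?_ fun _ => rfl
  exact and_iff_right_of_imp fun h => h.isProbabilityMeasure

theorem IsCoupling.wCost_le (hp : 0 ≤ p) [IsProbabilityMeasure μ] (h : IsCoupling π μ ν) :
    wCost p μ ν ≤ ∫⁻ z, edist z.1 z.2 ^ p ∂π :=
  (wCost_eq_iInf_edist hp).trans_le (iInf₂_le π h)

theorem exists_isCoupling_lintegral_lt (hp : 0 ≤ p) [IsProbabilityMeasure μ] {c : ℝ≥0∞}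
    (h : wCost p μ ν < c) : ∃ π, IsCoupling π μ ν ∧ ∫⁻ z, edist z.1 z.2 ^ p ∂π < c := by
  simpa only [wCost_eq_iInf_edist hp, iInf_lt_iff, exists_prop] using h

variable [BorelSpace X] {x₀ : X}

theorem wCost_ne_top (hp : 1 ≤ p) (hμ : μ ∈ Pp p x₀) (hν : ν ∈ Pp p x₀) : wCost p μ ν ≠ ⊤ := by
  rw [mem_Pp_iff (zero_le_one.trans hp)] at hμ hν
  obtain ⟨_, hμ⟩ := hμ
  obtain ⟨_, hν⟩ := hν
  obtain ⟨π, hπ⟩ := exists_isCoupling (α := μ) (β := ν) (by simp only [measure_univ])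
  exact ne_top_of_le_ne_top
    (ENNReal.mul_ne_top (two_rpow_ne_top _) (ENNReal.add_ne_top.2 ⟨hμ.ne, hν.ne⟩))
    ((hπ.wCost_le (zero_le_one.trans hp)).trans (hπ.lintegral_edist_rpow_le hp x₀))

/-- `μ'` and `ν'` are what is left after transporting as much mass as possible inside each cell
`G i`. -/
theorem exists_le_wCost_le_of_pairwise_disjoint (hp : 1 ≤ p) (μ ν : Measure X)
    [IsProbabilityMeasure μ] [IsProbabilityMeasure ν] {ι : Type*} [Countable ι] {G : ι → Set X}
    (hG : ∀ i, MeasurableSet (G i)) (hdisj : Pairwise (Function.onFun Disjoint G)) {ε : ℝ≥0∞}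
    (hε : ∀ i, ∀ x ∈ G i, ∀ y ∈ G i, edist x y ≤ ε) :
    ∃ μ' ≤ μ, ∃ ν' ≤ ν, μ' univ = 1 - ∑' i, min (μ (G i)) (ν (G i)) ∧
      ν' univ = 1 - ∑' i, min (μ (G i)) (ν (G i)) ∧
      ∀ x₀, wCost p μ ν ≤
        ε ^ p + 2 ^ (p - 1) * (∫⁻ x, edist x₀ x ^ p ∂μ' + ∫⁻ x, edist x₀ x ^ p ∂ν') := by
  have hp₀ : 0 ≤ p := zero_le_one.trans hp
  obtain ⟨α, hα, β, hβ, π, hπ, hπ_univ, hπ_cost⟩ :=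
    exists_isCoupling_of_pairwise_disjoint hp₀ μ ν hG hdisj hε
  have := isFiniteMeasure_of_le μ hα
  have := isFiniteMeasure_of_le ν hβ
  have hμ_univ : (μ - α) univ = 1 - π univ := by
    rw [Measure.sub_apply .univ hα, measure_univ, hπ.measure_univ_left]
  have hν_univ : (ν - β) univ = 1 - π univ := by
    rw [Measure.sub_apply .univ hβ, measure_univ, hπ.measure_univ_right]
  obtain ⟨ρ, hρ⟩ := exists_isCoupling (hμ_univ.trans hν_univ.symm)
  have hπρ : IsCoupling (π + ρ) μ ν := by
    have := hρ.add hπ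
    rwa [Measure.sub_add_cancel_of_le hα, Measure.sub_add_cancel_of_le hβ, add_comm] at this
  have hπ_le : π univ ≤ 1 := hπ.measure_univ_left.trans_le ((hα univ).trans prob_le_one)
  refine ⟨μ - α, Measure.sub_le, ν - β, Measure.sub_le, hπ_univ ▸ hμ_univ,
    hπ_univ ▸ hν_univ, fun x₀ => ?_⟩
  calc wCost p μ ν ≤ ∫⁻ z, edist z.1 z.2 ^ p ∂(π + ρ) := hπρ.wCost_le hp₀
    _ = ∫⁻ z, edist z.1 z.2 ^ p ∂π + ∫⁻ z, edist z.1 z.2 ^ p ∂ρ := lintegral_add_measure _ _ _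
    _ ≤ _ := add_le_add (hπ_cost.trans (mul_le_of_le_one_right' hπ_le))
        (hρ.lintegral_edist_rpow_le hp x₀)

end Cost

section WeakConvAndMoments

variable [MetricSpace X] [MeasurableSpace X] [BorelSpace X] {p : ℝ} {x₀ : X}
  {μs : ℕ → Measure X} {μ : Measure X}

theorem WeakConv.tendsto_wCost [TopologicalSpace.SeparableSpace X] (hp : 1 ≤ p)
    [∀ n, IsProbabilityMeasure (μs n)] [IsProbabilityMeasure μ] (h : WeakConv μs μ)
    (hμ : ∫⁻ x, edist x₀ x ^ p ∂μ ≠ ⊤)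
    (hmom : Tendsto (fun n => ∫⁻ x, edist x₀ x ^ p ∂(μs n)) atTop
      (𝓝 (∫⁻ x, edist x₀ x ^ p ∂μ))) :
    Tendsto (fun n => wCost p (μs n) μ) atTop (𝓝 0) := by
  have hp₀ : 0 < p := zero_lt_one.trans_le hp
  have : Nonempty X := ⟨x₀⟩
  have hH := continuous_edist_rpow x₀ p
  have hH_top := edist_rpow_ne_top hp₀.le x₀
  have hε₀ : Tendsto (fun ε : ℝ => ENNReal.ofReal ε ^ p) (𝓝[>] 0) (𝓝 0) := by
    simpa only [ENNReal.ofReal_zero, ENNReal.zero_rpow_of_pos hp₀] using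
      ((ENNReal.continuous_ofReal.tendsto 0).mono_left nhdsWithin_le_nhds).ennrpow_const p
  refine tendsto_zero_of_eventually_le_add hε₀ ?_
  filter_upwards [self_mem_nhdsWithin] with ε (hε : 0 < ε)
  obtain ⟨G, hG, hdisj, hGε, hμG⟩ := exists_isOpen_pairwise_disjoint_dist_le μ hε
  choose αs hα βs hβ hα_univ hβ_univ hcost using fun n =>
    exists_le_wCost_le_of_pairwise_disjoint hp (μs n) μ (fun i => (hG i).measurableSet) hdisj
      fun i x hx y hy => edist_le_ofReal hε.le |>.2 (hGε i x hx y hy)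
  have hmass : Tendsto (fun n => 1 - ∑' i, min (μs n (G i)) (μ (G i))) atTop (𝓝 0) := by
    simpa only [tsub_self] using ENNReal.Tendsto.sub tendsto_const_nhds
      (h.tendsto_tsum_min_measure hG hdisj hμG) (Or.inl ENNReal.one_ne_top)
  have hαs := h.tendsto_lintegral_zero_of_le hα (by simpa only [hα_univ] using hmass)
    hH hH_top hμ hmom
  have hβs := WeakConv.tendsto_lintegral_zero_of_le (μs := fun _ => μ)
    (fun _ => tendsto_const_nhds) hβ (by simpa only [hβ_univ] using hmass) hH hH_top hμ
    tendsto_const_nhds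
  refine ⟨_, ?_, fun n => hcost n x₀⟩
  simpa only [add_zero, mul_zero] using
    ENNReal.Tendsto.const_mul (hαs.add hβs) (Or.inr (two_rpow_ne_top (p - 1)))

end WeakConvAndMoments

section Convergence

theorem lintegral_le_lintegral_rpow_rpow_inv {Ω : Type*} [MeasurableSpace Ω] {P : Measure Ω}
    [IsProbabilityMeasure P] {p : ℝ} (hp : 1 ≤ p) {g : Ω → ℝ≥0∞} (hg : AEMeasurable g P) :
    ∫⁻ ω, g ω ∂P ≤ (∫⁻ ω, g ω ^ p ∂P) ^ p⁻¹ := by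
  simpa only [eLpNorm', enorm_eq_self, ENNReal.rpow_one, one_div, inv_one] using
    eLpNorm'_le_eLpNorm'_of_exponent_le one_pos hp P hg.aestronglyMeasurable

theorem IsCoupling.edist_integral_le [PseudoEMetricSpace X] [MeasurableSpace X]
    [OpensMeasurableSpace X] {π : Measure (X × X)} {α β : Measure X} [IsFiniteMeasure α]
    (h : IsCoupling π α β) {g : X → ℝ} {L : ℝ≥0} (hL : LipschitzWith L g) {B : ℝ}
    (hB : ∀ x, ‖g x‖ ≤ B) :
    edist (∫ x, g x ∂α) (∫ x, g x ∂β) ≤ L * ∫⁻ z, edist z.1 z.2 ∂π := by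
  have : IsFiniteMeasure π := ⟨h.measure_univ_left ▸ measure_lt_top α univ⟩
  have hg : Measurable g := hL.continuous.measurable
  have hfst : Integrable (fun z : X × X => g z.1) π :=
    .of_bound (hg.comp measurable_fst).aestronglyMeasurable B (ae_of_all _ fun z => hB z.1)
  have hsnd : Integrable (fun z : X × X => g z.2) π :=
    .of_bound (hg.comp measurable_snd).aestronglyMeasurable B (ae_of_all _ fun z => hB z.2)
  calc edist (∫ x, g x ∂α) (∫ x, g x ∂β) = ‖∫ z, (g z.1 - g z.2) ∂π‖ₑ := by
        rw [edist_eq_enorm_sub, integral_sub hfst hsnd, ← h.1, ← h.2,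
          integral_map measurable_fst.aemeasurable hg.aestronglyMeasurable,
          integral_map measurable_snd.aemeasurable hg.aestronglyMeasurable]
    _ ≤ ∫⁻ z, ‖g z.1 - g z.2‖ₑ ∂π := enorm_integral_le_lintegral_enorm _
    _ ≤ ∫⁻ z, L * edist z.1 z.2 ∂π :=
        lintegral_mono fun z => (edist_eq_enorm_sub _ _).symm.trans_le (hL z.1 z.2)
    _ = L * ∫⁻ z, edist z.1 z.2 ∂π := lintegral_const_mul' _ _ ENNReal.coe_ne_top

theorem weakConv_of_tendsto_lintegral_edist [PseudoMetricSpace X] [MeasurableSpace X]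
    [OpensMeasurableSpace X] {μs : ℕ → Measure X} {μ : Measure X}
    [∀ n, IsProbabilityMeasure (μs n)] [IsProbabilityMeasure μ] {π : ℕ → Measure (X × X)}
    (hπ : ∀ n, IsCoupling (π n) (μs n) μ)
    (h : Tendsto (fun n => ∫⁻ z, edist z.1 z.2 ∂(π n)) atTop (𝓝 0)) : WeakConv μs μ := by
  refine (weakConv_coe_iff_tendsto (μs := fun n => ⟨μs n, inferInstance⟩)
    (μ := ⟨μ, inferInstance⟩)).2 (tendsto_iff_forall_lipschitz_integral_tendsto.2 ?_)
  rintro g ⟨C, hC⟩ ⟨L, hL⟩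
  obtain ⟨x₀⟩ := nonempty_of_isProbabilityMeasure μ
  have hB (x : X) : ‖g x‖ ≤ ‖g x₀‖ + C :=
    (norm_le_norm_add_norm_sub' (g x) (g x₀)).trans
      (add_le_add_right ((dist_eq_norm _ _).symm.trans_le (hC x x₀)) _)
  refine tendsto_iff_edist_tendsto_0.2 (tendsto_of_tendsto_of_tendsto_of_le_of_le
    tendsto_const_nhds ?_ (fun _ => zero_le) fun n => (hπ n).edist_integral_le hL hB)
  simpa only [mul_zero] using ENNReal.Tendsto.const_mul h (Or.inr ENNReal.coe_ne_top)

theorem IsCoupling.lintegral_rpow_inv_le_add [PseudoEMetricSpace X] [MeasurableSpace X]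
    [OpensMeasurableSpace X] [SecondCountableTopology X] {π : Measure (X × X)} {α β : Measure X}
    {p : ℝ} (hp : 1 ≤ p) (h : IsCoupling π α β) (x₀ : X) :
    (∫⁻ x, edist x₀ x ^ p ∂α) ^ p⁻¹ ≤
      (∫⁻ x, edist x₀ x ^ p ∂β) ^ p⁻¹ + (∫⁻ z, edist z.1 z.2 ^ p ∂π) ^ p⁻¹ := by
  have hp₀ : 0 ≤ p := zero_le_one.trans hp
  have hm : Measurable fun x => edist x₀ x ^ p := by fun_prop
  rw [← h.lintegral_fst hm, ← h.lintegral_snd hm]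
  calc (∫⁻ z, edist x₀ z.1 ^ p ∂π) ^ p⁻¹
      ≤ (∫⁻ z, (edist x₀ z.2 + edist z.1 z.2) ^ p ∂π) ^ p⁻¹ :=
        ENNReal.rpow_le_rpow (lintegral_mono fun z => ENNReal.rpow_le_rpow
          (by simpa only [edist_comm z.1] using edist_triangle x₀ z.2 z.1) hp₀) (inv_nonneg.2 hp₀)
    _ ≤ _ := by
        simpa only [one_div, Pi.add_apply] using
          ENNReal.lintegral_Lp_add_le (μ := π) (f := fun z => edist x₀ z.2)
            (g := fun z => edist z.1 z.2) (by fun_prop) (by fun_prop) hp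

theorem WeakConv.tendsto_lintegral_edist_rpow [PseudoMetricSpace X] [MeasurableSpace X]
    [OpensMeasurableSpace X] [SecondCountableTopology X] {μs : ℕ → Measure X} {μ : Measure X}
    [∀ n, IsProbabilityMeasure (μs n)] [IsProbabilityMeasure μ] (h : WeakConv μs μ) {p : ℝ}
    (hp : 1 ≤ p) {π : ℕ → Measure (X × X)} (hπ : ∀ n, IsCoupling (π n) (μs n) μ)
    (hcost : Tendsto (fun n => (∫⁻ z, edist z.1 z.2 ^ p ∂(π n)) ^ p⁻¹) atTop (𝓝 0)) (x₀ : X) :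
    Tendsto (fun n => ∫⁻ x, edist x₀ x ^ p ∂(μs n)) atTop (𝓝 (∫⁻ x, edist x₀ x ^ p ∂μ)) := by
  have hp₀ : 0 < p := zero_lt_one.trans_le hp
  set m := ∫⁻ x, edist x₀ x ^ p ∂μ
  have hle (n : ℕ) : ∫⁻ x, edist x₀ x ^ p ∂(μs n) ≤
      (m ^ p⁻¹ + (∫⁻ z, edist z.1 z.2 ^ p ∂(π n)) ^ p⁻¹) ^ p :=
    (ENNReal.rpow_inv_le_iff hp₀).1 ((hπ n).lintegral_rpow_inv_le_add hp x₀)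
  have hlim : Tendsto (fun n => (m ^ p⁻¹ + (∫⁻ z, edist z.1 z.2 ^ p ∂(π n)) ^ p⁻¹) ^ p) atTop
      (𝓝 m) := by
    simpa only [add_zero, ENNReal.rpow_inv_rpow hp₀.ne'] using
      (hcost.const_add (m ^ p⁻¹)).ennrpow_const p
  refine tendsto_of_le_liminf_of_limsup_le (h.lintegral_le_liminf
    (continuous_edist_rpow x₀ p) (edist_rpow_ne_top hp₀.le x₀)) ?_
  exact (limsup_le_limsup (Eventually.of_forall hle)).trans_eq hlim.limsup_eq

variable [MetricSpace X] [MeasurableSpace X] {p : ℝ} {x₀ : X}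
  {μs : ℕ → Measure X} {μ : Measure X}

theorem wpTendsto_iff_tendsto_wCost (hp : 0 < p) (hfin : ∀ n, wCost p (μs n) μ ≠ ⊤) :
    WpTendsto p μs μ ↔ Tendsto (fun n => wCost p (μs n) μ) atTop (𝓝 0) := by
  have hfin' (n : ℕ) : wCost p (μs n) μ ^ (1 / p) ≠ ⊤ :=
    ENNReal.rpow_ne_top_of_nonneg (one_div_pos.2 hp).le (hfin n)
  have hroot : WpTendsto p μs μ ↔ Tendsto (fun n => wCost p (μs n) μ ^ (1 / p)) atTop (𝓝 0) :=
    ENNReal.tendsto_toReal_iff hfin' ENNReal.zero_ne_top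
  refine hroot.trans ⟨fun h => ?_, fun h => ?_⟩
  · simpa only [← ENNReal.rpow_mul, one_div_mul_cancel hp.ne', ENNReal.rpow_one,
      ENNReal.zero_rpow_of_pos hp] using h.ennrpow_const p
  · simpa only [ENNReal.zero_rpow_of_pos (one_div_pos.2 hp)] using h.ennrpow_const (1 / p)

theorem exists_isCoupling_tendsto_lintegral (hp : 0 ≤ p) [∀ n, IsProbabilityMeasure (μs n)]
    (hfin : ∀ n, wCost p (μs n) μ ≠ ⊤)
    (h : Tendsto (fun n => wCost p (μs n) μ) atTop (𝓝 0)) :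
    ∃ π : ℕ → Measure (X × X), (∀ n, IsCoupling (π n) (μs n) μ) ∧
      Tendsto (fun n => ∫⁻ z, edist z.1 z.2 ^ p ∂(π n)) atTop (𝓝 0) := by
  obtain ⟨u, -, hu, hu₀⟩ := exists_seq_strictAnti_tendsto' (zero_lt_one (α := ℝ≥0∞))
  choose π hπ hlt using fun n =>
    exists_isCoupling_lintegral_lt hp (ENNReal.lt_add_right (hfin n) (hu n).1.ne')
  refine ⟨π, hπ, tendsto_of_tendsto_of_tendsto_of_le_of_le tendsto_const_nhds ?_
    (fun _ => zero_le) fun n => (hlt n).le⟩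
  simpa only [add_zero] using h.add hu₀

theorem wpTendsto_iff [BorelSpace X] [SecondCountableTopology X] (hp : 1 ≤ p)
    (hμs : ∀ n, μs n ∈ Pp p x₀) (hμ : μ ∈ Pp p x₀) :
    WpTendsto p μs μ ↔ WeakConv μs μ ∧ Tendsto (fun n => ∫⁻ x, edist x₀ x ^ p ∂(μs n)) atTop
      (𝓝 (∫⁻ x, edist x₀ x ^ p ∂μ)) := by
  have hp₀ : 0 < p := zero_lt_one.trans_le hp
  have hfin (n : ℕ) : wCost p (μs n) μ ≠ ⊤ := wCost_ne_top hp (hμs n) hμ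
  have (n : ℕ) : IsProbabilityMeasure (μs n) := (hμs n).1
  have : IsProbabilityMeasure μ := hμ.1
  rw [wpTendsto_iff_tendsto_wCost hp₀ hfin]
  refine ⟨fun h => ?_, fun h => h.1.tendsto_wCost hp ((mem_Pp_iff hp₀.le).1 hμ).2.ne h.2⟩
  obtain ⟨π, hπ, hcost⟩ := exists_isCoupling_tendsto_lintegral hp₀.le hfin h
  have hroot : Tendsto (fun n => (∫⁻ z, edist z.1 z.2 ^ p ∂(π n)) ^ p⁻¹) atTop (𝓝 0) := by
    simpa only [ENNReal.zero_rpow_of_pos (inv_pos.2 hp₀)] using hcost.ennrpow_const p⁻¹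
  have hweak : WeakConv μs μ := by
    refine weakConv_of_tendsto_lintegral_edist hπ (tendsto_of_tendsto_of_tendsto_of_le_of_le
      tendsto_const_nhds hroot (fun _ => zero_le) fun n => ?_)
    have := (hπ n).isProbabilityMeasure
    exact lintegral_le_lintegral_rpow_rpow_inv hp (by fun_prop)
  exact ⟨hweak, hweak.tendsto_lintegral_edist_rpow hp hπ hroot x₀⟩

end Convergence

section Kernel

open ProbabilityTheory

section MarkovKernel

variable {Y : Type*} [MeasurableSpace X] [MeasurableSpace Y]

theorem integral_bind_kernel {μ : Measure X} {κ : Kernel X Y} {g : Y → ℝ}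
    (hg : Integrable g (μ.bind κ)) : ∫ y, g y ∂(μ.bind κ) = ∫ x, ∫ y, g y ∂(κ x) ∂μ := by
  rw [Measure.comp_eq_comp_const_apply] at hg ⊢
  rw [Kernel.integral_comp hg, Kernel.const_apply]

theorem bind_mix (κ : Kernel X Y) (t : ℝ) (μ ν : Measure X) :
    (mix t μ ν).bind κ = mix t (μ.bind κ) (ν.bind κ) := by
  rw [mix, Measure.comp_add, Measure.comp_smul, Measure.comp_smul, mix]

theorem WeakConv.bind [TopologicalSpace X] [SequentialSpace X]
    [TopologicalSpace Y] [OpensMeasurableSpace Y] {μs : ℕ → Measure X} {μ : Measure X}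
    [∀ n, IsFiniteMeasure (μs n)] [IsFiniteMeasure μ] (h : WeakConv μs μ) {κ : Kernel X Y}
    [IsMarkovKernel κ]
    (hκ : ∀ (xs : ℕ → X) (x : X), Tendsto xs atTop (𝓝 x) → WeakConv (fun n => κ (xs n)) (κ x)) :
    WeakConv (fun n => (μs n).bind κ) (μ.bind κ) := fun g => by
  have hcont : Continuous fun x => ∫ y, g y ∂(κ x) :=
    SeqContinuous.continuous fun xs x hxs => hκ xs x hxs g
  have hbound (x : X) : ‖∫ y, g y ∂(κ x)‖ ≤ ‖g‖ := g.norm_integral_le_norm (κ x)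
  simpa only [integral_bind_kernel (g.integrable _),
    BoundedContinuousFunction.coe_ofNormedAddCommGroup] using
    h (BoundedContinuousFunction.ofNormedAddCommGroup _ hcont ‖g‖ hbound)

theorem IsCoupling.of_kernel {μ : Measure Y} [SFinite μ] {κ : Kernel Y X} [IsMarkovKernel κ]
    {f : Y → X} (hf : Measurable f) :
    IsCoupling ((μ.compProd κ).map fun z => (z.2, f z.1)) (μ.bind κ) (μ.map f) := by
  have hmeas : Measurable fun z : Y × X => (z.2, f z.1) := by fun_prop
  constructor
  · rw [Measure.map_map measurable_fst hmeas]
    exact Measure.snd_compProd μ κ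
  · rw [Measure.map_map measurable_snd hmeas]
    conv_rhs => rw [← Measure.fst_compProd μ κ, Measure.fst, Measure.map_map hf measurable_fst]
    rfl

end MarkovKernel

section MomentBound

variable [PseudoMetricSpace X] {Y : Type*} {p : ℝ} {x₀ : X} {f : Y → X} {C : ℝ≥0∞}

/-- The bound `2 ^ (p - 1) * (d(x₀, f y) ^ p + C)` for the `p`-th moment about `x₀` of any
probability measure whose `p`-th power transport cost to the Dirac mass at `f y` is at most `C`.
As a function of `y` it dominates the moments of a Markov kernel that stays within cost `C`
of `f`. -/
def momentBound (p : ℝ) (x₀ : X) (f : Y → X) (C : ℝ≥0∞) (y : Y) : ℝ≥0∞ :=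
  2 ^ (p - 1) * (edist x₀ (f y) ^ p + C)

theorem momentBound_ne_top (hp : 0 ≤ p) (hC : C ≠ ⊤) (y : Y) : momentBound p x₀ f C y ≠ ⊤ :=
  ENNReal.mul_ne_top (two_rpow_ne_top _) (ENNReal.add_ne_top.2 ⟨edist_rpow_ne_top hp _ _, hC⟩)

theorem continuous_momentBound [TopologicalSpace Y] (hf : Continuous f) :
    Continuous (momentBound p x₀ f C) :=
  (ENNReal.continuous_const_mul (two_rpow_ne_top _)).comp
    (((continuous_edist_rpow x₀ p).comp hf).add continuous_const)

variable [MeasurableSpace X] [OpensMeasurableSpace X]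

theorem lintegral_edist_rpow_le_momentBound (hp : 1 ≤ p) {y : Y} {ν : Measure X}
    [IsProbabilityMeasure ν] (h : ∫⁻ x, edist x (f y) ^ p ∂ν ≤ C) :
    ∫⁻ x, edist x₀ x ^ p ∂ν ≤ momentBound p x₀ f C y :=
  calc ∫⁻ x, edist x₀ x ^ p ∂ν
      ≤ ∫⁻ x, 2 ^ (p - 1) * (edist x₀ (f y) ^ p + edist x (f y) ^ p) ∂ν :=
        lintegral_mono fun x => by
          simpa only [edist_comm (f y)] using edist_rpow_le_two_rpow_mul hp x₀ x (f y)
    _ = 2 ^ (p - 1) * (edist x₀ (f y) ^ p + ∫⁻ x, edist x (f y) ^ p ∂ν) := by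
        rw [lintegral_const_mul _ (by fun_prop), lintegral_add_left measurable_const,
          lintegral_const, measure_univ, mul_one]
    _ ≤ momentBound p x₀ f C y := by
        rw [momentBound]
        gcongr

theorem lintegral_momentBound [MeasurableSpace Y] (hf : Measurable f) (μ : Measure Y)
    [IsProbabilityMeasure μ] :
    ∫⁻ y, momentBound p x₀ f C y ∂μ =
      2 ^ (p - 1) * (∫⁻ x, edist x₀ x ^ p ∂(μ.map f) + C) := by
  simp only [momentBound]
  rw [lintegral_const_mul _ (by fun_prop), lintegral_add_right _ measurable_const,
    lintegral_map (by fun_prop) hf, lintegral_const, measure_univ, mul_one]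

end MomentBound

section KernelNearMap

variable [MetricSpace X] [MeasurableSpace X] {p : ℝ} {x₀ : X}

theorem Wp_le_iff (hp : 0 < p) {μ ν : Measure X} (h : wCost p μ ν ≠ ⊤) {M : ℝ} (hM : 0 ≤ M) :
    Wp p μ ν ≤ M ↔ wCost p μ ν ≤ ENNReal.ofReal M ^ p := by
  rw [Wp, one_div, ← ENNReal.le_ofReal_iff_toReal_le
    (ENNReal.rpow_ne_top_of_nonneg (inv_nonneg.2 hp.le) h) hM, ENNReal.rpow_inv_le_iff hp]

variable [BorelSpace X]

theorem dirac_mem_Pp (hp : 0 ≤ p) (z : X) : Measure.dirac z ∈ Pp p x₀ := by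
  rw [mem_Pp_iff hp, lintegral_dirac]
  exact ⟨inferInstance, (edist_rpow_ne_top hp x₀ z).lt_top⟩

theorem lintegral_edist_rpow_le_wCost_dirac (hp : 0 ≤ p) (ν : Measure X)
    [IsProbabilityMeasure ν] (z : X) :
    ∫⁻ x, edist x z ^ p ∂ν ≤ wCost p ν (Measure.dirac z) := by
  rw [wCost_eq_iInf_edist hp]
  refine le_iInf₂ fun π hπ => ?_
  have hsnd : ∀ᵐ w ∂π, w.2 = z := by
    refine ae_of_ae_map (p := (· = z)) measurable_snd.aemeasurable ?_
    rw [hπ.2]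
    exact (ae_dirac_iff (measurableSet_singleton z)).2 rfl
  rw [← hπ.lintegral_fst (by fun_prop)]
  refine lintegral_mono_ae (hsnd.mono fun w hw => ?_)
  rw [hw]

variable {Y : Type*} [MeasurableSpace Y] {f : Y → X} {C : ℝ≥0∞} {κ : Kernel Y X}
  [IsMarkovKernel κ]

theorem kernel_mem_Pp (hp : 1 ≤ p) (hC : C ≠ ⊤)
    (hκ : ∀ y, ∫⁻ x, edist x (f y) ^ p ∂(κ y) ≤ C) (y : Y) : κ y ∈ Pp p x₀ := by
  have hp₀ : 0 ≤ p := zero_le_one.trans hp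
  exact (mem_Pp_iff hp₀).2 ⟨inferInstance,
    (lintegral_edist_rpow_le_momentBound hp (hκ y)).trans_lt
      (momentBound_ne_top hp₀ hC y).lt_top⟩

theorem wCost_bind_map_le [SecondCountableTopology X] (hp : 0 ≤ p) (hf : Measurable f)
    (hκ : ∀ y, ∫⁻ x, edist x (f y) ^ p ∂(κ y) ≤ C) (μ : Measure Y) [IsProbabilityMeasure μ] :
    wCost p (μ.bind κ) (μ.map f) ≤ C := by
  have hmeas : Measurable fun z : Y × X => (z.2, f z.1) := by fun_prop
  have hcost : Measurable fun z : X × X => edist z.1 z.2 ^ p := by fun_prop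
  calc wCost p (μ.bind κ) (μ.map f)
      ≤ ∫⁻ z, edist z.1 z.2 ^ p ∂((μ.compProd κ).map fun z => (z.2, f z.1)) :=
        (IsCoupling.of_kernel hf).wCost_le hp
    _ = ∫⁻ y, ∫⁻ x, edist x (f y) ^ p ∂(κ y) ∂μ := by
        rw [lintegral_map hcost hmeas]
        exact Measure.lintegral_compProd (hcost.comp hmeas)
    _ ≤ ∫⁻ _, C ∂μ := lintegral_mono hκ
    _ = C := by rw [lintegral_const, measure_univ, mul_one]

theorem bind_mem_Pp (hp : 1 ≤ p) (hf : Measurable f) (hC : C ≠ ⊤)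
    (hκ : ∀ y, ∫⁻ x, edist x (f y) ^ p ∂(κ y) ≤ C) {μ : Measure Y} [IsProbabilityMeasure μ]
    (hμ : μ.map f ∈ Pp p x₀) : μ.bind κ ∈ Pp p x₀ := by
  rw [mem_Pp_iff (zero_le_one.trans hp)] at hμ ⊢
  refine ⟨inferInstance, ?_⟩
  calc ∫⁻ x, edist x₀ x ^ p ∂(μ.bind κ)
      = ∫⁻ y, ∫⁻ x, edist x₀ x ^ p ∂(κ y) ∂μ :=
        Measure.lintegral_bind κ.measurable.aemeasurable (by fun_prop)
    _ ≤ ∫⁻ y, momentBound p x₀ f C y ∂μ :=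
        lintegral_mono fun y => lintegral_edist_rpow_le_momentBound hp (hκ y)
    _ = 2 ^ (p - 1) * (∫⁻ x, edist x₀ x ^ p ∂(μ.map f) + C) := lintegral_momentBound hf μ
    _ < ⊤ := (ENNReal.mul_ne_top (two_rpow_ne_top _) (ENNReal.add_ne_top.2 ⟨hμ.2.ne, hC⟩)).lt_top

theorem WeakConv.wpTendsto_bind [SecondCountableTopology X] [TopologicalSpace Y]
    [SequentialSpace Y] [HasOuterApproxClosed Y] [OpensMeasurableSpace Y] (hp : 1 ≤ p)
    (hf : Continuous f) (hC : C ≠ ⊤) (hκ : ∀ y, ∫⁻ x, edist x (f y) ^ p ∂(κ y) ≤ C)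
    (hκ_cont : ∀ (ys : ℕ → Y) (y : Y), Tendsto ys atTop (𝓝 y) →
      WpTendsto p (fun n => κ (ys n)) (κ y))
    {μs : ℕ → Measure Y} {μ : Measure Y} [∀ n, IsProbabilityMeasure (μs n)]
    [IsProbabilityMeasure μ] (h : WeakConv μs μ) (hμs : ∀ n, (μs n).map f ∈ Pp p x₀)
    (hμ : μ.map f ∈ Pp p x₀) (hmap : WpTendsto p (fun n => (μs n).map f) (μ.map f)) :
    WpTendsto p (fun n => (μs n).bind κ) (μ.bind κ) := by
  have hp₀ : 0 ≤ p := zero_le_one.trans hp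
  have hκ_iff (ys : ℕ → Y) (y : Y) (hys : Tendsto ys atTop (𝓝 y)) :=
    (wpTendsto_iff (x₀ := x₀) hp (fun n => kernel_mem_Pp hp hC hκ (ys n))
      (kernel_mem_Pp hp hC hκ y)).1 (hκ_cont ys y hys)
  have hmoment_cont : Continuous fun y => ∫⁻ x, edist x₀ x ^ p ∂(κ y) :=
    SeqContinuous.continuous fun ys y hys => (hκ_iff ys y hys).2
  have hbound_top : ∫⁻ y, momentBound p x₀ f C y ∂μ ≠ ⊤ := by
    rw [lintegral_momentBound hf.measurable]
    exact ENNReal.mul_ne_top (two_rpow_ne_top _)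
      (ENNReal.add_ne_top.2 ⟨((mem_Pp_iff hp₀).1 hμ).2.ne, hC⟩)
  have hbound_lim : Tendsto (fun n => ∫⁻ y, momentBound p x₀ f C y ∂(μs n)) atTop
      (𝓝 (∫⁻ y, momentBound p x₀ f C y ∂μ)) := by
    simp only [lintegral_momentBound hf.measurable]
    exact ENNReal.Tendsto.const_mul (((wpTendsto_iff hp hμs hμ).1 hmap).2.add tendsto_const_nhds)
      (Or.inr (two_rpow_ne_top _))
  have hmoment_bind (ν : Measure Y) :
      ∫⁻ x, edist x₀ x ^ p ∂(ν.bind κ) = ∫⁻ y, ∫⁻ x, edist x₀ x ^ p ∂(κ y) ∂ν :=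
    Measure.lintegral_bind κ.measurable.aemeasurable (by fun_prop)
  refine (wpTendsto_iff hp (fun n => bind_mem_Pp hp hf.measurable hC hκ (hμs n))
    (bind_mem_Pp hp hf.measurable hC hκ hμ)).2
    ⟨h.bind fun ys y hys => (hκ_iff ys y hys).1, ?_⟩
  simp only [hmoment_bind]
  exact h.tendsto_lintegral_of_dominated hmoment_cont (continuous_momentBound hf)
    (fun y => lintegral_edist_rpow_le_momentBound hp (hκ y)) (momentBound_ne_top hp₀ hC)
    hbound_top hbound_lim

end KernelNearMap

end Kernel

theorem kernel_induces_MW_map_relative_to_f_general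
    [MetricSpace X] [MeasurableSpace X] [BorelSpace X] [TopologicalSpace.SeparableSpace X]
    (p : ℝ) (hp : 1 ≤ p) (x₀ : X) (f : X → X) (hf : Continuous f)
    (hmap : ∀ μ ∈ Pp p x₀, μ.map f ∈ Pp p x₀)
    (hcont : ∀ (μs : ℕ → Measure X) (μ : Measure X), (∀ n, μs n ∈ Pp p x₀) → μ ∈ Pp p x₀ →
      WpTendsto p μs μ → WpTendsto p (fun n => (μs n).map f) (μ.map f))
    (q : ProbabilityTheory.Kernel X X) [ProbabilityTheory.IsMarkovKernel q]
    (hq_mem : ∀ x : X, (q x : Measure X) ∈ Pp p x₀)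
    (hq_cont : ∀ (xs : ℕ → X) (x : X), Tendsto xs atTop (𝓝 x) →
      Tendsto (fun n => Wp p (q (xs n)) (q x)) atTop (𝓝 0))
    (M : ℝ) (hM : ∀ x : X, Wp p (q x) (Measure.dirac (f x)) ≤ M) :
    (∀ μ ∈ Pp p x₀, μ.bind (fun x => q x) ∈ Pp p x₀) ∧
    (∀ (μs : ℕ → Measure X) (μ : Measure X), (∀ n, μs n ∈ Pp p x₀) → μ ∈ Pp p x₀ →
      WpTendsto p μs μ →
      WpTendsto p (fun n => (μs n).bind (fun x => q x)) (μ.bind (fun x => q x))) ∧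
    (∀ t : ℝ, 0 ≤ t → t ≤ 1 → ∀ μ ∈ Pp p x₀, ∀ ν ∈ Pp p x₀,
      (mix t μ ν).bind (fun x => q x) = mix t (μ.bind (fun x => q x)) (ν.bind (fun x => q x))) ∧
    (∀ μ ∈ Pp p x₀, Wp p (μ.bind (fun x => q x)) (μ.map f) ≤ M) := by
  have := UniformSpace.secondCountable_of_separable X
  have hp₀ : 0 < p := zero_lt_one.trans_le hp
  have hM₀ : 0 ≤ M := ENNReal.toReal_nonneg.trans (hM x₀)
  have hC : ENNReal.ofReal M ^ p ≠ ⊤ := ENNReal.rpow_ne_top_of_nonneg hp₀.le ENNReal.ofReal_ne_top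
  have hlocal (x : X) : ∫⁻ y, edist y (f x) ^ p ∂(q x) ≤ ENNReal.ofReal M ^ p :=
    (lintegral_edist_rpow_le_wCost_dirac hp₀.le (q x) (f x)).trans <|
      (Wp_le_iff hp₀ (wCost_ne_top hp (hq_mem x) (dirac_mem_Pp hp₀.le (f x))) hM₀).1 (hM x)
  refine ⟨fun μ hμ => ?_, fun μs μ hμs hμ h => ?_, fun t _ _ μ _ ν _ => bind_mix q t μ ν,
    fun μ hμ => ?_⟩
  · have := hμ.1
    exact bind_mem_Pp hp hf.measurable hC hlocal (hmap μ hμ)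
  · have := fun n => (hμs n).1
    have := hμ.1
    exact ((wpTendsto_iff hp hμs hμ).1 h).1.wpTendsto_bind hp hf hC hlocal hq_cont
      (fun n => hmap _ (hμs n)) (hmap μ hμ) (hcont μs μ hμs hμ h)
  · have := hμ.1
    have hcost := wCost_bind_map_le hp₀.le hf.measurable hlocal μ
    exact (Wp_le_iff hp₀ (ne_top_of_le_ne_top hC hcost) hM₀).2 hcost

/-- A continuous Markov kernel `q : X → P_p(X)` with `sup_x w_p(q(x), δ_{f(x)}) = M < ∞`
induces an MW-map of order `p` relative to `f` with noise level `M`: the map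
`P(μ) = ∫ q(x) dμ(x)` maps `P_p(X)` into itself, is `w_p`-continuous, convex linear, and
satisfies `w_p(P(μ), f_*(μ)) ≤ M`. -/
theorem kernel_induces_MW_map_relative_to_f
    [MetricSpace X] [MeasurableSpace X] [BorelSpace X] [ProperSpace X] [CompleteSpace X]
    [TopologicalSpace.SeparableSpace X]
    (p : ℝ) (hp : 1 ≤ p) (x₀ : X) (f : X → X) (hf : Continuous f)
    (hmap : ∀ μ ∈ Pp p x₀, μ.map f ∈ Pp p x₀)
    (hcont : ∀ (μs : ℕ → Measure X) (μ : Measure X), (∀ n, μs n ∈ Pp p x₀) → μ ∈ Pp p x₀ →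
      WpTendsto p μs μ → WpTendsto p (fun n => (μs n).map f) (μ.map f))
    (q : ProbabilityTheory.Kernel X X) [ProbabilityTheory.IsMarkovKernel q]
    (hq_mem : ∀ x : X, (q x : Measure X) ∈ Pp p x₀)
    (hq_cont : ∀ (xs : ℕ → X) (x : X), Tendsto xs atTop (𝓝 x) →
      Tendsto (fun n => Wp p (q (xs n)) (q x)) atTop (𝓝 0))
    (M : ℝ) (hM : ∀ x : X, Wp p (q x) (Measure.dirac (f x)) ≤ M) :
    (∀ μ ∈ Pp p x₀, μ.bind (fun x => q x) ∈ Pp p x₀) ∧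
    (∀ (μs : ℕ → Measure X) (μ : Measure X), (∀ n, μs n ∈ Pp p x₀) → μ ∈ Pp p x₀ →
      WpTendsto p μs μ →
      WpTendsto p (fun n => (μs n).bind (fun x => q x)) (μ.bind (fun x => q x))) ∧
    (∀ t : ℝ, 0 ≤ t → t ≤ 1 → ∀ μ ∈ Pp p x₀, ∀ ν ∈ Pp p x₀,
      (mix t μ ν).bind (fun x => q x) = mix t (μ.bind (fun x => q x)) (ν.bind (fun x => q x))) ∧
    (∀ μ ∈ Pp p x₀, Wp p (μ.bind (fun x => q x)) (μ.map f) ≤ M) :=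
  kernel_induces_MW_map_relative_to_f_general p hp x₀ f hf hmap hcont q hq_mem hq_cont M hM
end
end

section
/- Let (X,d) be a complete separable metric space. For all mu_0, mu_1 in P_1(X) and every t in [0,1], setting mu_t = t mu_1 + (1-t) mu_0, one has the equality w_1(mu_t, mu_0) = t * w_1(mu_1, mu_0). -/
open MeasureTheory Topology Filter Metric Set
open scoped ENNReal NNReal

noncomputable section

variable {X : Type*}

/-! Only the triangle inequality and convexity are needed. Pairing `μ₀` with itself at no cost gives
`w₁(μ_t, μ₀) ≤ t w₁(μ₁, μ₀)` and, in the same way, `w₁(μ₁, μ_t) ≤ (1 - t) w₁(μ₁, μ₀)`. Hence the two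
pieces of `w₁(μ₁, μ₀) ≤ w₁(μ₁, μ_t) + w₁(μ_t, μ₀)` have no slack, and subtracting the finite number
`(1 - t) w₁(μ₁, μ₀)` gives the reverse of the first bound. For `0 < p ≤ 1` the function `d ^ p` is
again a metric, so the same argument computes the cost of order `p`. -/

open ProbabilityTheory in
theorem exists_gluing_of_snd_eq_fst {α β γ : Type*} [MeasurableSpace α]
    [MeasurableSpace β] [MeasurableSpace γ] [StandardBorelSpace γ] [Nonempty γ]
    {π : Measure (α × β)} {σ : Measure (β × γ)} [IsFiniteMeasure π] [IsFiniteMeasure σ]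
    (h : π.snd = σ.fst) :
    ∃ ρ : Measure ((α × β) × γ),
      ρ.map Prod.fst = π ∧ ρ.map (fun w ↦ (w.1.2, w.2)) = σ := by
  refine ⟨π ⊗ₘ σ.condKernel.comap Prod.snd measurable_snd, Measure.fst_compProd _ _, ?_⟩
  have hglue : Measurable fun w : (α × β) × γ ↦ (w.1.2, w.2) := by fun_prop
  conv_rhs => rw [← σ.disintegrate σ.condKernel, ← h]
  ext s hs
  rw [Measure.map_apply hglue hs, Measure.compProd_apply (hglue hs), Measure.compProd_apply hs,
    Measure.snd, lintegral_map (Kernel.measurable_kernel_prodMk_left hs) measurable_snd]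
  rfl

section Mix

variable [MeasurableSpace X] {t : ℝ}

theorem ofReal_add_ofReal_one_sub (ht0 : 0 ≤ t) (ht1 : t ≤ 1) :
    ENNReal.ofReal t + ENNReal.ofReal (1 - t) = 1 := by
  rw [← ENNReal.ofReal_add ht0 (sub_nonneg.2 ht1), add_sub_cancel, ENNReal.ofReal_one]

theorem mix_self (ht0 : 0 ≤ t) (ht1 : t ≤ 1) (μ : Measure X) : mix t μ μ = μ := by
  rw [mix, ← add_smul, ofReal_add_ofReal_one_sub ht0 ht1, one_smul]

theorem isProbabilityMeasure_mix (ht0 : 0 ≤ t) (ht1 : t ≤ 1) (μ ν : Measure X)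
    [IsProbabilityMeasure μ] [IsProbabilityMeasure ν] : IsProbabilityMeasure (mix t μ ν) :=
  ⟨by simp [mix, ofReal_add_ofReal_one_sub ht0 ht1]⟩

theorem lintegral_mix (f : X → ℝ≥0∞) (μ ν : Measure X) :
    ∫⁻ x, f x ∂(mix t μ ν) =
      ENNReal.ofReal t * ∫⁻ x, f x ∂μ + ENNReal.ofReal (1 - t) * ∫⁻ x, f x ∂ν := by
  simp [mix]

theorem map_mix {Y : Type*} [MeasurableSpace Y] {f : X → Y} (hf : Measurable f)
    (μ ν : Measure X) : (mix t μ ν).map f = mix t (μ.map f) (ν.map f) := by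
  simp [mix, Measure.map_add _ _ hf]

end Mix

namespace IsCoupling

variable [MeasurableSpace X] {π π' : Measure (X × X)} {μ μ' ν ν' : Measure X}

theorem mix (h : IsCoupling π μ ν) (h' : IsCoupling π' μ' ν') (t : ℝ) :
    IsCoupling (mix t π π') (mix t μ μ') (mix t ν ν') := by
  constructor
  · rw [map_mix measurable_fst, h.1, h'.1]
  · rw [map_mix measurable_snd, h.2, h'.2]

theorem diag (μ : Measure X) : IsCoupling (μ.map fun x ↦ (x, x)) μ μ := by
  constructor <;> rw [Measure.map_map (by fun_prop) (by fun_prop)] <;> exact Measure.map_id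

theorem prod (μ ν : Measure X) [IsProbabilityMeasure μ] [IsProbabilityMeasure ν] :
    IsCoupling (μ.prod ν) μ ν :=
  ⟨Measure.fst_prod, Measure.snd_prod⟩

theorem isProbabilityMeasure_s15 (h : IsCoupling π μ ν) [IsProbabilityMeasure μ] :
    IsProbabilityMeasure π :=
  have : IsProbabilityMeasure (π.map Prod.fst) := h.1 ▸ inferInstance
  Measure.isProbabilityMeasure_of_map Prod.fst

end IsCoupling

theorem ofReal_dist_rpow_triangle [MetricSpace X] {p : ℝ} (hp0 : 0 ≤ p) (hp1 : p ≤ 1)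
    (x y z : X) :
    ENNReal.ofReal (dist x z ^ p) ≤
      ENNReal.ofReal (dist x y ^ p) + ENNReal.ofReal (dist y z ^ p) := by
  rw [← ENNReal.ofReal_add (by positivity) (by positivity)]
  gcongr
  calc dist x z ^ p ≤ (dist x y + dist y z) ^ p := by gcongr; exact dist_triangle x y z
    _ ≤ dist x y ^ p + dist y z ^ p := Real.rpow_add_le_add_rpow dist_nonneg dist_nonneg hp0 hp1

section WassersteinCost

variable [MetricSpace X] [MeasurableSpace X] {p t : ℝ} {μ ν μ₀ μ₁ : Measure X}

theorem wCost_le_lintegral {π : Measure (X × X)} [IsProbabilityMeasure π]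
    (h : IsCoupling π μ ν) : wCost p μ ν ≤ ∫⁻ q, ENNReal.ofReal (dist q.1 q.2 ^ p) ∂π :=
  iInf₂_le π ⟨‹_›, h⟩

theorem wCost_self (hp : p ≠ 0) (μ : Measure X) [IsProbabilityMeasure μ] :
    wCost p μ μ = 0 := by
  have := (IsCoupling.diag μ).isProbabilityMeasure_s15
  rw [← nonpos_iff_eq_zero]
  calc wCost p μ μ ≤ ∫⁻ q, ENNReal.ofReal (dist q.1 q.2 ^ p) ∂(μ.map fun x ↦ (x, x)) :=
        wCost_le_lintegral (IsCoupling.diag μ)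
    _ ≤ ∫⁻ x, ENNReal.ofReal (dist x x ^ p) ∂μ := lintegral_map_le _ _
    _ = 0 := by simp [Real.zero_rpow hp]

theorem wCost_mix_mix_le (ht0 : 0 ≤ t) (ht1 : t ≤ 1) (μ μ' ν ν' : Measure X) :
    wCost p (mix t μ μ') (mix t ν ν') ≤
      ENNReal.ofReal t * wCost p μ ν + ENNReal.ofReal (1 - t) * wCost p μ' ν' := by
  -- At the endpoints a vanishing weight may multiply an infinite cost.
  rcases ht0.eq_or_lt with rfl | ht0'
  · simp [mix]
  rcases ht1.eq_or_lt with rfl | ht1'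
  · simp [mix]
  have ht : ENNReal.ofReal t ≠ 0 := by simpa using ht0'
  have hs : ENNReal.ofReal (1 - t) ≠ 0 := by simpa using ht1'
  simp_rw [wCost.eq_def p μ ν, wCost.eq_def p μ' ν',
    ENNReal.mul_iInf_of_ne ht ENNReal.ofReal_ne_top,
    ENNReal.mul_iInf_of_ne hs ENNReal.ofReal_ne_top, ENNReal.iInf_add, ENNReal.add_iInf]
  refine le_iInf₂ fun π ⟨_, hπ⟩ ↦ le_iInf₂ fun π' ⟨_, hπ'⟩ ↦ ?_
  have := isProbabilityMeasure_mix ht0 ht1 π π'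
  exact (wCost_le_lintegral (hπ.mix hπ' t)).trans_eq (lintegral_mix _ π π')

theorem wCost_mix_left_le (hp : p ≠ 0) (ht0 : 0 ≤ t) (ht1 : t ≤ 1) (μ ν : Measure X)
    [IsProbabilityMeasure ν] : wCost p (mix t μ ν) ν ≤ ENNReal.ofReal t * wCost p μ ν := by
  simpa [mix_self ht0 ht1, wCost_self hp] using wCost_mix_mix_le (p := p) ht0 ht1 μ ν ν ν

theorem wCost_mix_right_le (hp : p ≠ 0) (ht0 : 0 ≤ t) (ht1 : t ≤ 1) (μ ν : Measure X)
    [IsProbabilityMeasure μ] :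
    wCost p μ (mix t μ ν) ≤ ENNReal.ofReal (1 - t) * wCost p μ ν := by
  simpa [mix_self ht0 ht1, wCost_self hp] using wCost_mix_mix_le (p := p) ht0 ht1 μ μ μ ν

theorem wCost_ne_top_of_finiteMoment [OpensMeasurableSpace X] (hp0 : 0 ≤ p) (hp1 : p ≤ 1)
    {x₀ : X} [IsProbabilityMeasure μ] [IsProbabilityMeasure ν]
    (hμ : FiniteMoment p x₀ μ) (hν : FiniteMoment p x₀ ν) :
    wCost p μ ν ≠ ⊤ := by
  have hmeas : Measurable fun x ↦ ENNReal.ofReal (dist x₀ x ^ p) := by fun_prop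
  refine ne_top_of_le_ne_top (ENNReal.add_ne_top.2 ⟨hμ.ne, hν.ne⟩) ?_
  calc wCost p μ ν ≤ ∫⁻ q, ENNReal.ofReal (dist q.1 q.2 ^ p) ∂(μ.prod ν) :=
        wCost_le_lintegral (IsCoupling.prod μ ν)
    _ ≤ ∫⁻ q, ENNReal.ofReal (dist x₀ q.1 ^ p) + ENNReal.ofReal (dist x₀ q.2 ^ p)
          ∂(μ.prod ν) :=
        lintegral_mono fun q ↦
          dist_comm x₀ q.1 ▸ ofReal_dist_rpow_triangle hp0 hp1 q.1 x₀ q.2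
    _ = ∫⁻ x, ENNReal.ofReal (dist x₀ x ^ p) ∂μ + ∫⁻ x, ENNReal.ofReal (dist x₀ x ^ p) ∂ν := by
        rw [lintegral_add_left (by fun_prop),
          measurePreserving_fst.lintegral_comp hmeas, measurePreserving_snd.lintegral_comp hmeas]

section StandardBorel

variable [OpensMeasurableSpace X] [SecondCountableTopology X] [StandardBorelSpace X]

theorem wCost_triangle (hp0 : 0 ≤ p) (hp1 : p ≤ 1) (μ ν ξ : Measure X) :
    wCost p μ ξ ≤ wCost p μ ν + wCost p ν ξ := by
  simp_rw [wCost.eq_def p μ ν, wCost.eq_def p ν ξ, ENNReal.iInf_add, ENNReal.add_iInf]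
  refine le_iInf₂ fun π ⟨_, hπ⟩ ↦ le_iInf₂ fun σ ⟨_, hσ⟩ ↦ ?_
  have : Nonempty X := (nonempty_of_isProbabilityMeasure π).map Prod.fst
  obtain ⟨ρ, hρπ, hρσ⟩ := exists_gluing_of_snd_eq_fst (hπ.2.trans hσ.1.symm)
  let c : X × X → ℝ≥0∞ := fun q ↦ ENNReal.ofReal (dist q.1 q.2 ^ p)
  have hc : Measurable c := by fun_prop
  have houter : IsCoupling (ρ.map fun w ↦ (w.1.1, w.2)) μ ξ := by
    constructor
    · rw [← hπ.1, ← hρπ, Measure.map_map (by fun_prop) (by fun_prop),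
        Measure.map_map (by fun_prop) (by fun_prop)]
      rfl
    · rw [← hσ.2, ← hρσ, Measure.map_map (by fun_prop) (by fun_prop),
        Measure.map_map (by fun_prop) (by fun_prop)]
      rfl
  have : IsProbabilityMeasure μ := hπ.1 ▸ Measure.isProbabilityMeasure_map (by fun_prop)
  have := houter.isProbabilityMeasure_s15
  calc wCost p μ ξ ≤ ∫⁻ q, c q ∂(ρ.map fun w ↦ (w.1.1, w.2)) := wCost_le_lintegral houter
    _ ≤ ∫⁻ w, c (w.1.1, w.2) ∂ρ := lintegral_map_le _ _
    _ ≤ ∫⁻ w, c w.1 + c (w.1.2, w.2) ∂ρ :=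
        lintegral_mono fun w ↦ ofReal_dist_rpow_triangle hp0 hp1 w.1.1 w.1.2 w.2
    _ = ∫⁻ q, c q ∂π + ∫⁻ q, c q ∂σ := by
        rw [lintegral_add_left (by fun_prop), ← hρπ, ← hρσ,
          lintegral_map hc (by fun_prop), lintegral_map hc (by fun_prop)]

theorem wCost_mix_left (hp0 : 0 < p) (hp1 : p ≤ 1) [IsProbabilityMeasure μ]
    [IsProbabilityMeasure ν] (hfin : wCost p μ ν ≠ ⊤) (ht0 : 0 ≤ t) (ht1 : t ≤ 1) :
    wCost p (mix t μ ν) ν = ENNReal.ofReal t * wCost p μ ν := by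
  refine (wCost_mix_left_le hp0.ne' ht0 ht1 μ ν).antisymm ?_
  refine (ENNReal.add_le_add_iff_left
    (ENNReal.mul_ne_top (ENNReal.ofReal_ne_top (r := 1 - t)) hfin)).1 ?_
  calc ENNReal.ofReal (1 - t) * wCost p μ ν + ENNReal.ofReal t * wCost p μ ν
      = wCost p μ ν := by
        rw [← add_mul, add_comm, ofReal_add_ofReal_one_sub ht0 ht1, one_mul]
    _ ≤ wCost p μ (mix t μ ν) + wCost p (mix t μ ν) ν := wCost_triangle hp0.le hp1 _ _ _
    _ ≤ ENNReal.ofReal (1 - t) * wCost p μ ν + wCost p (mix t μ ν) ν := by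
        gcongr
        exact wCost_mix_right_le hp0.ne' ht0 ht1 μ ν

theorem w1_convex_combination_eq_general (hp0 : 0 < p) (hp1 : p ≤ 1)
    [IsProbabilityMeasure μ₀] [IsProbabilityMeasure μ₁] (hfin : wCost p μ₁ μ₀ ≠ ⊤)
    (ht0 : 0 ≤ t) (ht1 : t ≤ 1) :
    Wp p (mix t μ₁ μ₀) μ₀ = t ^ (1 / p) * Wp p μ₁ μ₀ := by
  rw [Wp, Wp, wCost_mix_left hp0 hp1 hfin ht0 ht1,
    ENNReal.mul_rpow_of_nonneg _ _ (by positivity), ENNReal.toReal_mul, ← ENNReal.toReal_rpow,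
    ENNReal.toReal_ofReal ht0]

end StandardBorel

end WassersteinCost

/-- For `μ₀, μ₁ ∈ P₁(X)` and `t ∈ [0,1]`, putting `μ_t = t μ₁ + (1-t) μ₀` one has
`w₁(μ_t, μ₀) = t ⬝ w₁(μ₁, μ₀)`. -/
theorem w1_convex_combination_eq
    [MetricSpace X] [MeasurableSpace X] [BorelSpace X] [CompleteSpace X]
    [TopologicalSpace.SeparableSpace X] (x₀ : X)
    (μ₀ μ₁ : Measure X) (hμ₀ : μ₀ ∈ Pp 1 x₀) (hμ₁ : μ₁ ∈ Pp 1 x₀)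
    (t : ℝ) (ht0 : 0 ≤ t) (ht1 : t ≤ 1) :
    Wp 1 (mix t μ₁ μ₀) μ₀ = t * Wp 1 μ₁ μ₀ := by
  have := hμ₀.1
  have := hμ₁.1
  have hfin : wCost 1 μ₁ μ₀ ≠ ⊤ :=
    wCost_ne_top_of_finiteMoment zero_le_one le_rfl hμ₁.2 hμ₀.2
  simpa using w1_convex_combination_eq_general one_pos le_rfl hfin ht0 ht1
end
end
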